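/- (Kernel Complex Lemma.) Let M i j (i, j ≥ 1) with horizontal maps h i j : M i j → M i (j+1) and vertical maps v i j : M i j → M (i+1) j form a commutative grid with exact rows and exact columns. Let K j = Ker(v 1 j) with maps κ j : K j → K (j+1) induced by h 1 j, and let L i = Ker(h i 1) with maps λ i : L i → L (i+1) induced by v i 1. Then for every n ≥ 1, the homology at position n of the kernel complex 0 → K₁ → K₂ → K₃ → ⋯ is isomorphic as an R-module to the homology at position n of the kernel complex 0 → L₁ → L₂ → L₃ → ⋯. (Here homology at position 1 means Ker κ₁, resp. Ker λ₁; homology at position n ≥ 2 means Ker κₙ / Im κₙ₋₁, resp. Ker λₙ / Im λₙ₋₁.) -/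

import Mathlib

/-! In a commutative square with first maps `f, g` and diagonal `d`, both `f` and `g` induce
isomorphisms out of `ker d / (ker f ⊔ ker g)`, so the subquotients they cut out of the two other
corners are isomorphic. By exactness, the isomorphisms for the squares along an antidiagonal of the
grid compose; at the two ends of the antidiagonal the subquotients are the homology modules of
the two kernel complexes. -/

section Subquotient

open LinearMap Submodule

variable {R A B C D : Type*} [Ring R] [AddCommGroup A] [AddCommGroup B] [AddCommGroup C]
  [AddCommGroup D] [Module R A] [Module R B] [Module R C] [Module R D]

/-- The subquotient `P / (P ⊓ Q)` of a module. The submodule `Q` need not lie in `P`. -/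
abbrev Subquotient (P Q : Submodule R A) : Type _ :=
  ↥P ⧸ Q.comap P.subtype

/-- The isomorphism of subquotients induced by `f`. -/
noncomputable def subquotientEquivOfMap (f : A →ₗ[R] B) {P Q : Submodule R A}
    {P' Q' : Submodule R B} (hP : P.map f = P') (hQ : Q'.comap f = Q) :
    Subquotient P Q ≃ₗ[R] Subquotient P' Q' :=
  let toP' : P →ₗ[R] P' := f.restrict fun _ ha ↦ hP ▸ mem_map_of_mem ha
  let toQuotient := (Q'.comap P'.subtype).mkQ ∘ₗ toP'
  have toP'_surjective : Function.Surjective toP' := by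
    rintro ⟨b, hb⟩
    obtain ⟨a, ha, rfl⟩ := hP ▸ hb
    exact ⟨⟨a, ha⟩, rfl⟩
  have comap_eq_ker : Q.comap P.subtype = ker toQuotient := by
    rw [ker_comp, ker_mkQ, ← hQ]
    rfl
  quotEquivOfEq _ _ comap_eq_ker ≪≫ₗ
    toQuotient.quotKerEquivOfSurjective ((mkQ_surjective _).comp toP'_surjective)

/-- The identification of subquotients with equal numerators and equal denominators. -/
noncomputable def subquotientEquivOfEq {P Q P' Q' : Submodule R A} (hP : P = P') (hQ : Q = Q') :
    Subquotient P Q ≃ₗ[R] Subquotient P' Q' :=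
  subquotientEquivOfMap LinearMap.id (by rw [map_id, hP]) (by rw [comap_id, hQ])

/-- The isomorphism induced by `f`; for a commutative square with diagonal `g' ∘ₗ f`, its source is
symmetric in the two legs `f` and `g`. -/
noncomputable def kerCompSubquotientEquiv {f : A →ₗ[R] B} (g : A →ₗ[R] C) (g' : B →ₗ[R] D)
    {K : Submodule R B} (hf : range f = K) :
    Subquotient (ker (g' ∘ₗ f)) (ker f ⊔ ker g) ≃ₗ[R] Subquotient (ker g' ⊓ K) ((ker g).map f) :=
  subquotientEquivOfMap f
    (by rw [ker_comp, Submodule.map_comap_eq, hf, inf_comm])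
    (by rw [Submodule.comap_map_eq, sup_comm])

theorem map_range_eq_map_range_of_commSq {f : A →ₗ[R] B} {g : A →ₗ[R] C} {g' : B →ₗ[R] D}
    {f' : C →ₗ[R] D} (hcomm : g' ∘ₗ f = f' ∘ₗ g) :
    (range f).map g' = (range g).map f' := by
  rw [← range_comp, ← range_comp, hcomm]

/-- The isomorphism sending the class of `f a` to the class of `g a`. -/
noncomputable def commSqSubquotientEquiv {f : A →ₗ[R] B} {g : A →ₗ[R] C} {g' : B →ₗ[R] D}
    {f' : C →ₗ[R] D} (hcomm : g' ∘ₗ f = f' ∘ₗ g) {K : Submodule R B} {L : Submodule R C}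
    (hf : range f = K) (hg : range g = L) :
    Subquotient (ker g' ⊓ K) ((ker g).map f) ≃ₗ[R] Subquotient (ker f' ⊓ L) ((ker f).map g) :=
  (kerCompSubquotientEquiv g g' hf).symm ≪≫ₗ
    subquotientEquivOfEq (by rw [hcomm]) (sup_comm _ _) ≪≫ₗ
    kerCompSubquotientEquiv f f' hg

end Subquotient

section InducedMap

open LinearMap Submodule

variable {R A B C : Type*} [Ring R] [AddCommGroup A] [AddCommGroup B] [AddCommGroup C]
  [Module R A] [Module R B] [Module R C]
  {P : Submodule R A} {Q : Submodule R B} {S : Submodule R C}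
  {f : A →ₗ[R] B} {g : B →ₗ[R] C} {φ : P →ₗ[R] Q} {ψ : Q →ₗ[R] S}

theorem map_subtype_ker_of_induced (hφ : ∀ x, (φ x : B) = f x) :
    (ker φ).map P.subtype = P ⊓ ker f := by
  have ker_eq : ker φ = (ker f).comap P.subtype := by
    ext x
    rw [mem_ker, ← ZeroMemClass.coe_eq_zero, hφ]
    rfl
  rw [ker_eq, map_comap_subtype]

theorem comap_subtype_map_of_induced (hφ : ∀ x, (φ x : B) = f x) :
    (P.map f).comap Q.subtype = range φ := by
  have comp_eq : Q.subtype ∘ₗ φ = f ∘ₗ P.subtype := LinearMap.ext hφ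
  rw [← comap_map_eq_of_injective Q.injective_subtype (range φ), ← range_comp, comp_eq,
    range_comp, range_subtype]

/-- The isomorphism induced by the inclusion of `P`. -/
noncomputable def kerEquivOfInduced (hφ : ∀ x, (φ x : B) = f x) :
    ker φ ≃ₗ[R] ↥(P ⊓ ker f) :=
  equivMapOfInjective P.subtype P.injective_subtype (ker φ) ≪≫ₗ
    LinearEquiv.ofEq _ _ (map_subtype_ker_of_induced hφ)

/-- The isomorphism induced by the inclusion of `Q`. -/
noncomputable def homologyEquivOfInduced (hφ : ∀ x, (φ x : B) = f x)
    (hψ : ∀ x, (ψ x : C) = g x) :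
    Subquotient (ker ψ) (range φ) ≃ₗ[R] Subquotient (Q ⊓ ker g) (P.map f) :=
  subquotientEquivOfMap Q.subtype
    (map_subtype_ker_of_induced hψ) (comap_subtype_map_of_induced hφ)

end InducedMap

section Grid

open LinearMap

variable {R : Type*} [Ring R] {M : ℕ → ℕ → Type*} [∀ i j, AddCommGroup (M i j)]
  [∀ i j, Module R (M i j)] (h : ∀ i j, M i j →ₗ[R] M i (j + 1))
  (v : ∀ i j, M i j →ₗ[R] M (i + 1) j)

/-- The homology at position `j + 1` of the complex of kernels of the vertical maps `v i _`,
realised as a subquotient of `M i (j + 1)`. -/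
abbrev RowKernelHomology (i j : ℕ) : Type _ :=
  Subquotient (ker (v i (j + 1)) ⊓ ker (h i (j + 1))) ((ker (v i j)).map (h i j))

/-- The homology at position `i + 1` of the complex of kernels of the horizontal maps `h _ j`,
realised as a subquotient of `M (i + 1) j`. -/
abbrev ColumnKernelHomology (i j : ℕ) : Type _ :=
  Subquotient (ker (h (i + 1) j) ⊓ ker (v (i + 1) j)) ((ker (h i j)).map (v i j))

variable {h v} (hcomm : ∀ i j, v i (j + 1) ∘ₗ h i j = h (i + 1) j ∘ₗ v i j)
  (hrow : ∀ i j, range (h i j) = ker (h i (j + 1)))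
  (hcol : ∀ i j, range (v i j) = ker (v (i + 1) j))

/-- The isomorphism across the square with corners `M i j` and `M (i + 1) (j + 1)`. -/
noncomputable def rowKernelHomologyEquivColumn (i j : ℕ) :
    RowKernelHomology h v i j ≃ₗ[R] ColumnKernelHomology h v i j :=
  commSqSubquotientEquiv (hcomm i j) (hrow i j) (hcol i j)

/-- The identification of the two homology modules living at the entry `M (i + 1) (j + 1)`. -/
noncomputable def columnKernelHomologyEquivRow (i j : ℕ) :
    ColumnKernelHomology h v i (j + 1) ≃ₗ[R] RowKernelHomology h v (i + 1) j :=
  subquotientEquivOfEq (inf_comm _ _)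
    (by rw [← hcol, ← hrow, map_range_eq_map_range_of_commSq (hcomm i j)])

/-- The composite isomorphism along the antidiagonal, from its top end down to row `i`. -/
noncomputable def antidiagonalEquiv {n : ℕ} :
    ∀ i j, j + i = n → (RowKernelHomology h v 0 n ≃ₗ[R] ColumnKernelHomology h v i j)
  | 0, _, rfl => rowKernelHomologyEquivColumn hcomm hrow hcol 0 _
  | i + 1, j, hij =>
    antidiagonalEquiv i (j + 1) ((Nat.succ_add_eq_add_succ j i).trans hij) ≪≫ₗ
      columnKernelHomologyEquivRow hcomm hrow hcol i j ≪≫ₗ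
      rowKernelHomologyEquivColumn hcomm hrow hcol (i + 1) j

end Grid

/-- The Kernel Complex Lemma.  Given a commutative grid of `R`-modules
`M i j` (indexed from `0`, corresponding to the indices `≥ 1` of the paper)
with horizontal maps `h i j : M i j → M i (j+1)` and vertical maps
`v i j : M i j → M (i+1) j`, commuting squares, exact rows and exact columns,
let `κ j : Ker (v 0 j) → Ker (v 0 (j+1))` be induced by `h 0 j` and
`lam i : Ker (h i 0) → Ker (h (i+1) 0)` be induced by `v i 0`.
Then the two kernel complexes `0 → Ker (v 0 0) → Ker (v 0 1) → ⋯` and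
`0 → Ker (h 0 0) → Ker (h 1 0) → ⋯` have isomorphic homology in each
position: at the first position the homology is `Ker (κ 0)`
(resp. `Ker (lam 0)`), and at position `n + 2` it is
`Ker (κ (n+1)) / Im (κ n)` (resp. `Ker (lam (n+1)) / Im (lam n)`). -/
theorem kernel_complex_lemma {R : Type*} [Ring R]
    (M : ℕ → ℕ → Type*) [∀ i j, AddCommGroup (M i j)] [∀ i j, Module R (M i j)]
    (h : ∀ i j, M i j →ₗ[R] M i (j + 1))
    (v : ∀ i j, M i j →ₗ[R] M (i + 1) j)
    (hcomm : ∀ i j, (v i (j + 1)) ∘ₗ (h i j) = (h (i + 1) j) ∘ₗ (v i j))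
    (hrow : ∀ i j, LinearMap.range (h i j) = LinearMap.ker (h i (j + 1)))
    (hcol : ∀ i j, LinearMap.range (v i j) = LinearMap.ker (v (i + 1) j))
    (κ : ∀ j, ↥(LinearMap.ker (v 0 j)) →ₗ[R] ↥(LinearMap.ker (v 0 (j + 1))))
    (hκ : ∀ j (x : ↥(LinearMap.ker (v 0 j))), ((κ j x : M 0 (j + 1))) = h 0 j (x : M 0 j))
    (lam : ∀ i, ↥(LinearMap.ker (h i 0)) →ₗ[R] ↥(LinearMap.ker (h (i + 1) 0)))
    (hlam : ∀ i (x : ↥(LinearMap.ker (h i 0))), ((lam i x : M (i + 1) 0)) = v i 0 (x : M i 0)) :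
    Nonempty (↥(LinearMap.ker (κ 0)) ≃ₗ[R] ↥(LinearMap.ker (lam 0))) ∧
    ∀ n : ℕ, Nonempty (
      (↥(LinearMap.ker (κ (n + 1))) ⧸
        (LinearMap.range (κ n)).comap (LinearMap.ker (κ (n + 1))).subtype)
      ≃ₗ[R]
      (↥(LinearMap.ker (lam (n + 1))) ⧸
        (LinearMap.range (lam n)).comap (LinearMap.ker (lam (n + 1))).subtype)) := by
  refine ⟨⟨?_⟩, fun n ↦ ⟨?_⟩⟩
  · exact kerEquivOfInduced (hκ 0) ≪≫ₗ LinearEquiv.ofEq _ _ (inf_comm _ _) ≪≫ₗ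
      (kerEquivOfInduced (hlam 0)).symm
  · exact homologyEquivOfInduced (hκ n) (hκ (n + 1)) ≪≫ₗ
      antidiagonalEquiv hcomm hrow hcol n 0 (Nat.zero_add n) ≪≫ₗ
      (homologyEquivOfInduced (hlam n) (hlam (n + 1))).symm
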